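/- Let v : ℝ → ℝ → ℝ be a smooth function of (x,t) with v_x(x,t) > 0 for all (x,t), satisfying the potential Calogero-Degasperis-Ibragimov-Shabat equation v_t = v_{xxx} - (3/4)·v_{xx}²/v_x + 3v_xv_{xx} + v_x³. Then h := v_x^{1/2}·e^{v} satisfies the linear equation h_t = h_{xxx}. -/

import Mathlib

/-!
Write `h = exp L` with `L = v + (log v_x) / 2`. Then `h_x = h r` with
`r = L_x = v_x + v_xx / (2 v_x)`, hence `h_xxx = h (r_xx + 3 r r_x + r³)`, while
`h_t = h (v_t + v_xt / (2 v_x))`. Since `v` is smooth, `v_xt = v_tx` (`Smooth2.dt_dx_comm`), so `v_xt` is the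
`x`-derivative of the right-hand side of the potential CDIS equation. Both sides divided by `h` are
now rational functions of `v_x, …, v_xxxx`, and they coincide identically.
-/

/-- Total `x`-derivative of a function of `(x, t)`. -/
noncomputable def dx (f : ℝ → ℝ → ℝ) : ℝ → ℝ → ℝ := fun x t => deriv (fun y => f y t) x

/-- Total `t`-derivative of a function of `(x, t)`. -/
noncomputable def dt (f : ℝ → ℝ → ℝ) : ℝ → ℝ → ℝ := fun x t => deriv (fun s => f x s) t

/-- The potential Calogero-Degasperis-Ibragimov-Shabat equation. -/
def PotCDIS (v : ℝ → ℝ → ℝ) : Prop :=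
  ∀ x t, dt v x t =
    dx (dx (dx v)) x t - (3/4) * (dx (dx v) x t)^2 / dx v x t
    + 3 * dx v x t * dx (dx v) x t + (dx v x t)^3

/-- Joint smoothness in `(x, t)` of a function in curried form. -/
def Smooth2 (f : ℝ → ℝ → ℝ) : Prop :=
  ContDiff ℝ (⊤ : ℕ∞) (fun p : ℝ × ℝ => f p.1 p.2)

lemma Smooth2.hasDerivAt_fst {f : ℝ → ℝ → ℝ} (hf : Smooth2 f) (x t : ℝ) :
    HasDerivAt (fun y => f y t) (fderiv ℝ (fun p : ℝ × ℝ => f p.1 p.2) (x, t) (1, 0)) x := by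
  have h1 := (hf.differentiable (by simp) (x, t)).hasFDerivAt
  have h2 : HasDerivAt (fun y : ℝ => (y, t)) ((1 : ℝ), (0 : ℝ)) x :=
    (hasDerivAt_id x).prodMk (hasDerivAt_const x t)
  exact h1.comp_hasDerivAt x h2

lemma Smooth2.hasDerivAt_snd {f : ℝ → ℝ → ℝ} (hf : Smooth2 f) (x t : ℝ) :
    HasDerivAt (fun s => f x s) (fderiv ℝ (fun p : ℝ × ℝ => f p.1 p.2) (x, t) (0, 1)) t := by
  have h1 := (hf.differentiable (by simp) (x, t)).hasFDerivAt
  have h2 : HasDerivAt (fun s : ℝ => (x, s)) ((0 : ℝ), (1 : ℝ)) t :=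
    (hasDerivAt_const t x).prodMk (hasDerivAt_id t)
  exact h1.comp_hasDerivAt t h2

lemma Smooth2.dx_eq {f : ℝ → ℝ → ℝ} (hf : Smooth2 f) (x t : ℝ) :
    dx f x t = fderiv ℝ (fun p : ℝ × ℝ => f p.1 p.2) (x, t) (1, 0) :=
  (hf.hasDerivAt_fst x t).deriv

lemma Smooth2.dt_eq {f : ℝ → ℝ → ℝ} (hf : Smooth2 f) (x t : ℝ) :
    dt f x t = fderiv ℝ (fun p : ℝ × ℝ => f p.1 p.2) (x, t) (0, 1) :=
  (hf.hasDerivAt_snd x t).deriv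

lemma Smooth2.hasDerivAt_dx {f : ℝ → ℝ → ℝ} (hf : Smooth2 f) (x t : ℝ) :
    HasDerivAt (fun y => f y t) (dx f x t) x := by
  rw [hf.dx_eq]; exact hf.hasDerivAt_fst x t

lemma Smooth2.hasDerivAt_dt {f : ℝ → ℝ → ℝ} (hf : Smooth2 f) (x t : ℝ) :
    HasDerivAt (fun s => f x s) (dt f x t) t := by
  rw [hf.dt_eq]; exact hf.hasDerivAt_snd x t

lemma Smooth2.fderiv_apply {f : ℝ → ℝ → ℝ} (hf : Smooth2 f) (e : ℝ × ℝ) :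
    ContDiff ℝ (⊤ : ℕ∞) (fun p => fderiv ℝ (fun p : ℝ × ℝ => f p.1 p.2) p e) :=
  (ContDiff.fderiv_right hf (by simp)).clm_apply contDiff_const

lemma Smooth2.dx {f : ℝ → ℝ → ℝ} (hf : Smooth2 f) : Smooth2 (dx f) := by
  unfold Smooth2
  simp_rw [hf.dx_eq]
  exact hf.fderiv_apply (1, 0)

lemma Smooth2.dt {f : ℝ → ℝ → ℝ} (hf : Smooth2 f) : Smooth2 (dt f) := by
  unfold Smooth2
  simp_rw [hf.dt_eq]
  exact hf.fderiv_apply (0, 1)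

/-- Mixed partial derivatives commute, by symmetry of the second Fréchet derivative. -/
lemma Smooth2.dt_dx_comm {f : ℝ → ℝ → ℝ} (hf : Smooth2 f) (x t : ℝ) :
    _root_.dt (_root_.dx f) x t = _root_.dx (_root_.dt f) x t := by
  have hd : DifferentiableAt ℝ (fderiv ℝ (fun p : ℝ × ℝ => f p.1 p.2)) (x, t) :=
    (ContDiff.fderiv_right (m := (⊤ : ℕ∞)) hf (by simp)).differentiable (by simp) _
  have key (e d : ℝ × ℝ) :
      fderiv ℝ (fun p => fderiv ℝ (fun p : ℝ × ℝ => f p.1 p.2) p e) (x, t) d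
        = fderiv ℝ (fderiv ℝ (fun p : ℝ × ℝ => f p.1 p.2)) (x, t) d e := by
    rw [fderiv_clm_apply hd (differentiableAt_const e)]
    simp
  have hs : IsSymmSndFDerivAt ℝ (fun p : ℝ × ℝ => f p.1 p.2) (x, t) :=
    (ContDiff.contDiffAt hf).isSymmSndFDerivAt (by
      rw [minSmoothness_of_isRCLikeNormedField]
      exact WithTop.coe_le_coe.2 (le_top (a := (2 : ℕ∞))))
  rw [hf.dx.dt_eq, hf.dt.dx_eq]
  simp_rw [hf.dx_eq, hf.dt_eq]
  rw [key, key]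
  exact hs _ _

/-- If `v` solves the potential CDIS equation with `v_x > 0`, then `h = v_x^{1/2}·e^v`
solves the linear equation `h_t = h_xxx`. -/
theorem potential_cdis_linearisation
    (v : ℝ → ℝ → ℝ)
    (hv : ContDiff ℝ (⊤ : ℕ∞) (fun p : ℝ × ℝ => v p.1 p.2))
    (hvx : ∀ x t, 0 < dx v x t)
    (heq : PotCDIS v)
    (h : ℝ → ℝ → ℝ)
    (hh : ∀ x t, h x t = (dx v x t) ^ ((1/2) : ℝ) * Real.exp (v x t)) :
    ∀ x t, dt h x t = dx (dx (dx h)) x t := by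
  have s0 : Smooth2 v := hv
  obtain ⟨p, hp⟩ : ∃ p, p = dx v := ⟨_, rfl⟩
  obtain ⟨q, hq⟩ : ∃ q, q = dx p := ⟨_, rfl⟩
  obtain ⟨a, ha⟩ : ∃ a, a = dx q := ⟨_, rfl⟩
  obtain ⟨b, hb⟩ : ∃ b, b = dx a := ⟨_, rfl⟩
  have s1 : Smooth2 p := hp ▸ s0.dx
  have s2 : Smooth2 q := hq ▸ s1.dx
  have s3 : Smooth2 a := ha ▸ s2.dx
  have d0 (x t) : HasDerivAt (fun y => v y t) (p x t) x := hp ▸ s0.hasDerivAt_dx x t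
  have d1 (x t) : HasDerivAt (fun y => p y t) (q x t) x := hq ▸ s1.hasDerivAt_dx x t
  have d2 (x t) : HasDerivAt (fun y => q y t) (a x t) x := ha ▸ s2.hasDerivAt_dx x t
  have d3 (x t) : HasDerivAt (fun y => a y t) (b x t) x := hb ▸ s3.hasDerivAt_dx x t
  have pos (x t) : 0 < p x t := hp ▸ hvx x t
  have ne (x t) : p x t ≠ 0 := (pos x t).ne'
  have vt (x t) : dt v x t = a x t - (3/4) * (q x t)^2 / p x t + 3 * p x t * q x t + (p x t)^3 := by
    rw [ha, hq, hp]; exact heq x t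
  have pt (x t) : dt p x t = b x t
      - (3/4) * (2 * q x t * a x t * p x t - (q x t)^2 * q x t) / (p x t)^2
      + 3 * (q x t * q x t + p x t * a x t) + 3 * (p x t)^2 * q x t := by
    rw [hp, s0.dt_dx_comm, ← hp]
    have e : (fun y => dt v y t) = fun y => a y t - (3/4) * (q y t)^2 / p y t
        + 3 * p y t * q y t + (p y t)^3 := funext fun y => vt y t
    change deriv (fun y => dt v y t) x = _
    rw [e]
    refine ((((d3 x t).sub ((((d2 x t).pow 2).const_mul (3/4)).div (d1 x t) (ne x t))).add
      (((d1 x t).const_mul 3).mul (d2 x t))).add ((d1 x t).pow 3)).deriv.trans ?_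
    have := ne x t
    simp only [Pi.pow_apply]
    field_simp
    ring
  have hexp : h = fun x t => Real.exp (v x t + Real.log (p x t) / 2) := by
    funext x t
    rw [hh, ← hp, Real.rpow_def_of_pos (pos x t), ← Real.exp_add]
    congr 1; ring
  have ht (x t) : dt h x t = h x t * (dt v x t + dt p x t / p x t / 2) := by
    have := ((s0.hasDerivAt_dt x t).add
      (((s1.hasDerivAt_dt x t).log (ne x t)).div_const 2)).exp.deriv
    rw [hexp]; exact this
  have hx (x t) : HasDerivAt (fun y => h y t) (h x t * (p x t + q x t / p x t / 2)) x := by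
    have := ((d0 x t).add (((d1 x t).log (ne x t)).div_const 2)).exp
    rw [hexp]; exact this
  -- `r1` and `r2` differentiate `r = h_x / h` once and twice in `x`.
  have r1 (x t) : HasDerivAt (fun y => p y t + q y t / p y t / 2)
      (q x t + (a x t * p x t - q x t * q x t) / (p x t)^2 / 2) x :=
    (d1 x t).add (((d2 x t).div (d1 x t) (ne x t)).div_const 2)
  have r2 (x t) := (d2 x t).add (((((d3 x t).mul (d1 x t)).sub ((d2 x t).mul (d2 x t))).div
    ((d1 x t).pow 2) (pow_ne_zero 2 (ne x t))).div_const 2)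
  have e1 : dx h = fun x t => h x t * (p x t + q x t / p x t / 2) := by
    funext x t; exact (hx x t).deriv
  have hxx (x t) := (hx x t).mul (r1 x t)
  have e2 : dx (dx h) = fun x t => h x t * (p x t + q x t / p x t / 2) * (p x t + q x t / p x t / 2)
      + h x t * (q x t + (a x t * p x t - q x t * q x t) / (p x t)^2 / 2) := by
    rw [e1]; funext x t; exact (hxx x t).deriv
  intro x t
  rw [ht, pt, vt, e2]
  refine Eq.trans ?_ (((hxx x t).mul (r1 x t)).add ((hx x t).mul (r2 x t))).deriv.symm
  have := ne x t
  simp only [Pi.pow_apply, Pi.mul_apply, Pi.add_apply, Pi.sub_apply, Pi.div_apply]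
  field_simp
  ring
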